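/- arXiv:1605.02171 — 2 statements merged into one kernel-verified Lean document; each statement's English description precedes it below -/
import Mathlib

section
/- Let a, b satisfy either a, b \in (-1,\infty) with ab > 0, or a, b \in \mathbb{C} \setminus \{0\} with b = \overline{a}; let c be a positive real number with c > \mathrm{Re}(a+b), and let \alpha \in \mathbb{C} with |\alpha| < 1. If |\alpha| \cdot \frac{\Gamma(c)\Gamma(c-a-b)}{\Gamma(c-a)\Gamma(c-b)} \leq 1 (this quantity being a positive real number), then the Taylor coefficients b_{n+1} = \frac{\alpha}{2} \frac{(a)_n (b)_n}{(c)_n n! (n+1)} of g_3(z) = (\alpha/2) \int_0^z F(a,b;c;t)\,dt satisfy \sum_{n=1}^{\infty} n |b_n| \leq 1/2; consequently f_3(z) = z + \overline{(\alpha/2) \int_0^z F(a,b;c;t)\,dt} is uniformly starlike in \mathbb{D}. -/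
open Complex Metric ComplexConjugate

noncomputable section

/-- The Pochhammer symbol `(x)ₙ = x(x+1)⋯(x+n-1)` for `x : ℂ`. -/
def poch (x : ℂ) (n : ℕ) : ℂ := (ascPochhammer ℂ n).eval x

/-- The analytic condition (due to Kanas–Ponnusamy–Sairam) characterizing uniform
starlikeness used in the paper, taken here as the formal definition of
"`h + conj g` is uniformly starlike in `𝔻`". -/
def UniformlyStarlikeOnDisk (h g : ℂ → ℂ) : Prop :=
  (h 0 + conj (g 0) = 0) ∧
  (∀ z ∈ ball (0:ℂ) 1, ‖deriv g z‖ < ‖deriv h z‖) ∧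
  (∀ z ∈ ball (0:ℂ) 1, ∀ ζ ∈ ball (0:ℂ) 1, z ≠ ζ →
    0 ≤ (((h z + conj (g z)) - (h ζ + conj (g ζ)))
        / ((z - ζ) * deriv h z - conj (z - ζ) * conj (deriv g z))).re) ∧
  (∀ z ∈ ball (0:ℂ) 1, z ≠ 0 →
    0 < ((h z + conj (g z))
        / (z * deriv h z - conj z * conj (deriv g z))).re)

/-- The Taylor coefficient `b_{n+1} = (α/2) (a)ₙ(b)ₙ/((c)ₙ n! (n+1))` of
`g₃(z) = (α/2) ∫₀ᶻ F(a,b;c;t) dt`. -/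
def bc3 (a b c α : ℂ) (n : ℕ) : ℂ :=
  α / 2 * (poch a n * poch b n) / (poch c n * (Nat.factorial n : ℂ) * (n + 1 : ℂ))

/-- The primitive `∫₀ᶻ F(a,b;c;t) dt = ∑ (a)ₙ(b)ₙ/((c)ₙ n! (n+1)) z^{n+1}`. -/
def hypFPrim (a b c z : ℂ) : ℂ :=
  ∑' n : ℕ, poch a n * poch b n
    / (poch c n * (Nat.factorial n : ℂ) * (n + 1 : ℂ)) * z ^ (n + 1)


/-- The ratio-product form of the coefficients. -/
def uco (s p c : ℝ) (n : ℕ) : ℝ :=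
  ∏ k ∈ Finset.range n, (((k:ℝ)^2 + s * k + p) / ((c + k) * (k + 1)))

lemma uco_succ (s p c : ℝ) (n : ℕ) :
    uco s p c (n+1) = uco s p c n * (((n:ℝ)^2 + s * n + p) / ((c + n) * (n + 1))) := by
  rw [uco, uco, Finset.prod_range_succ]

lemma uco_nonneg (s p c : ℝ) (hc : 0 < c) (h : ∀ n : ℕ, 0 ≤ (n:ℝ)^2 + s * n + p) (n : ℕ) :
    0 ≤ uco s p c n :=
  Finset.prod_nonneg fun k _ => div_nonneg (h k) (by positivity)

lemma uco_shift (s p c : ℝ) (hc : 0 < c) (n : ℕ) :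
    uco s p (c+1) n * (c + n) = uco s p c n * c := by
  induction n with
  | zero => simp [uco]
  | succ n ih =>
    have h1 : (c + n) ≠ 0 := by positivity
    have h2 : (c + 1 + n) ≠ 0 := by positivity
    have h3 : ((n:ℝ) + 1) ≠ 0 := by positivity
    have : uco s p (c+1) n = uco s p c n * c / (c + n) := by
      rw [eq_div_iff h1, ih]
    rw [uco_succ, uco_succ, this]
    push_cast
    field_simp
    ring

lemma uco_tele (s p c : ℝ) (hc : 0 < c) (N : ℕ) :
    (c^2 - s * c + p) * ∑ n ∈ Finset.range N, uco s p (c+1) n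
      = c * (c - s) * (∑ n ∈ Finset.range N, uco s p c n) + c * (N * uco s p c N) := by
  induction N with
  | zero => simp
  | succ n ih =>
    have h1 : (c + n) ≠ 0 := by positivity
    have h3 : ((n:ℝ) + 1) ≠ 0 := by positivity
    have h := uco_shift s p c hc n
    have : uco s p (c+1) n = uco s p c n * c / (c + n) := by
      rw [eq_div_iff h1, h]
    rw [Finset.sum_range_succ, Finset.sum_range_succ, mul_add, ih, uco_succ, this]
    push_cast
    field_simp
    ring

/-- Partial Gauss product. -/
def gprod (s p c : ℝ) (m : ℕ) : ℝ :=
  ∏ k ∈ Finset.range m, (((c+k)^2 - s * (c+k) + p) / ((c+k) * (c+k-s)))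

lemma uco_le (s p c : ℝ) (hc : 0 < c) (hs : s < c) (h : ∀ n : ℕ, 0 ≤ (n:ℝ)^2 + s * n + p)
    (h' : ∀ k : ℕ, 0 ≤ (c+k)^2 - s * (c+k) + p) (N m : ℕ) :
    ∑ n ∈ Finset.range N, uco s p c n
      ≤ gprod s p c m * ∑ n ∈ Finset.range N, uco s p (c+m) n := by
  induction m with
  | zero => simp [gprod]
  | succ m ih =>
    refine ih.trans ?_
    have hcm : 0 < c + m := by positivity
    have hsm : 0 < c + m - s := by have : (0:ℝ) ≤ m := by positivity
                                   linarith
    have h1 := uco_tele s p (c+m) hcm N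
    have h2 := uco_nonneg s p (c+m) hcm h N
    have hg : 0 ≤ gprod s p c m := Finset.prod_nonneg fun k _ => by
      have : (0:ℝ) ≤ k := by positivity
      exact div_nonneg (h' k) (mul_nonneg (by positivity) (by linarith))
    have e : gprod s p c (m+1) = gprod s p c m *
      (((c+m)^2 - s * (c+m) + p) / ((c+m) * (c+m-s))) := by
      rw [gprod, gprod, Finset.prod_range_succ]
    rw [e, mul_assoc]
    apply mul_le_mul_of_nonneg_left _ hg
    rw [div_mul_eq_mul_div, le_div_iff₀ (by positivity)]
    push_cast
    rw [← add_assoc, h1]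
    have : 0 ≤ (c+m) * (N * uco s p (c+m) N) := by positivity
    linarith

lemma uco_tendsto (s p c : ℝ) (n : ℕ) :
    Filter.Tendsto (fun m : ℕ => uco s p (c+m) (n+1)) Filter.atTop (nhds 0) := by
  have key : ∀ k : ℕ, Filter.Tendsto
      (fun m : ℕ => (((k:ℝ)^2 + s * k + p) / ((c + m + k) * (k + 1)))) Filter.atTop (nhds 0) := by
    intro k
    apply Filter.Tendsto.const_div_atTop
    apply Filter.Tendsto.atTop_mul_const (by positivity)
    apply Filter.tendsto_atTop_add_const_right
    exact Filter.tendsto_atTop_add_const_left _ _ tendsto_natCast_atTop_atTop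
  have := tendsto_finsetProd (Finset.range (n+1)) (fun k _ => key k)
  simpa [uco] using this

lemma usum_tendsto (s p c : ℝ) (N : ℕ) :
    Filter.Tendsto (fun m : ℕ => ∑ n ∈ Finset.range (N+1), uco s p (c+m) n)
      Filter.atTop (nhds 1) := by
  simp_rw [Finset.sum_range_succ']
  have := tendsto_finsetSum (Finset.range N) (fun n _ => uco_tendsto s p c n)
  have h2 := this.add (tendsto_const_nhds (x := (1:ℝ)))
  simpa [uco] using h2

lemma usum_le_limit (s p c L : ℝ) (hc : 0 < c) (hs : s < c)
    (h : ∀ n : ℕ, 0 ≤ (n:ℝ)^2 + s * n + p)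
    (h' : ∀ k : ℕ, 0 ≤ (c+k)^2 - s * (c+k) + p)
    (hL : Filter.Tendsto (fun m => gprod s p c m) Filter.atTop (nhds L)) (N : ℕ) :
    ∑ n ∈ Finset.range N, uco s p c n ≤ L := by
  have h1 : ∑ n ∈ Finset.range (N+1), uco s p c n ≤ L := by
    have := hL.mul (usum_tendsto s p c N)
    rw [mul_one] at this
    exact ge_of_tendsto' this fun m => uco_le s p c hc hs h h' (N+1) m
  rw [Finset.sum_range_succ] at h1
  have := uco_nonneg s p c hc h N
  linarith

lemma gprod_tendsto (a b : ℂ) (s p c : ℝ) (hab : a + b = s) (hp : a * b = p)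
    (hca : a.re < c) (hcb : b.re < c) :
    Filter.Tendsto (fun m => ((gprod s p c m : ℝ) : ℂ)) Filter.atTop
      (nhds (Complex.Gamma (c : ℂ) * Complex.Gamma ((c : ℂ) - a - b)
          / (Complex.Gamma ((c : ℂ) - a) * Complex.Gamma ((c : ℂ) - b)))) := by
  rw [← Filter.tendsto_add_atTop_iff_nat 1]
  have n1 : Complex.Gamma ((c:ℂ) - a) ≠ 0 :=
    Complex.Gamma_ne_zero_of_re_pos (by simpa using hca)
  have n2 : Complex.Gamma ((c:ℂ) - b) ≠ 0 :=
    Complex.Gamma_ne_zero_of_re_pos (by simpa using hcb)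
  have := ((Complex.GammaSeq_tendsto_Gamma (c:ℂ)).mul
    (Complex.GammaSeq_tendsto_Gamma ((c:ℂ) - a - b))).div
    ((Complex.GammaSeq_tendsto_Gamma ((c:ℂ) - a)).mul
    (Complex.GammaSeq_tendsto_Gamma ((c:ℂ) - b))) (mul_ne_zero n1 n2)
  refine this.congr' ?_
  filter_upwards [Filter.eventually_ge_atTop 1] with m hm
  have hm0 : (m:ℂ) ≠ 0 := by exact_mod_cast (by omega : m ≠ 0)
  have hf : (Nat.factorial m : ℂ) ≠ 0 := by exact_mod_cast Nat.factorial_ne_zero m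
  have hpow : (m:ℂ)^(c:ℂ) * (m:ℂ)^((c:ℂ)-a-b) = (m:ℂ)^((c:ℂ)-a) * (m:ℂ)^((c:ℂ)-b) := by
    rw [← Complex.cpow_add _ _ hm0, ← Complex.cpow_add _ _ hm0]; congr 1; ring
  have hx1 : (m:ℂ)^((c:ℂ)-a) ≠ 0 := by simp [Complex.cpow_eq_zero_iff, hm0]
  have hx2 : (m:ℂ)^((c:ℂ)-b) ≠ 0 := by simp [Complex.cpow_eq_zero_iff, hm0]
  have e : ((gprod s p c (m+1) : ℝ) : ℂ) =
      ((∏ j ∈ Finset.range (m+1), ((c:ℂ) - a + j)) * (∏ j ∈ Finset.range (m+1), ((c:ℂ) - b + j)))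
      / ((∏ j ∈ Finset.range (m+1), ((c:ℂ) + j)) *
         (∏ j ∈ Finset.range (m+1), ((c:ℂ) - a - b + j))) := by
    rw [← Finset.prod_mul_distrib, ← Finset.prod_mul_distrib, ← Finset.prod_div_distrib]
    unfold gprod
    push_cast
    refine Finset.prod_congr rfl fun k _ => ?_
    rw [← hab, ← hp]
    congr 1 <;> ring
  rw [e]
  simp only [Complex.GammaSeq, Pi.div_apply]
  generalize (∏ j ∈ Finset.range (m+1), ((c:ℂ) - a + j)) = A
  generalize (∏ j ∈ Finset.range (m+1), ((c:ℂ) - b + j)) = B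
  generalize (∏ j ∈ Finset.range (m+1), ((c:ℂ) + j)) = C
  generalize (∏ j ∈ Finset.range (m+1), ((c:ℂ) - a - b + j)) = D
  rw [div_mul_div_comm, div_mul_div_comm, div_div_div_eq]
  have e1 : (m:ℂ)^(c:ℂ) * (Nat.factorial m : ℂ) * ((m:ℂ)^((c:ℂ)-a-b) * (Nat.factorial m : ℂ))
    = (m:ℂ)^((c:ℂ)-a) * (Nat.factorial m : ℂ) * ((m:ℂ)^((c:ℂ)-b) * (Nat.factorial m : ℂ)) := by
    linear_combination (Nat.factorial m : ℂ)^2 * hpow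
  rw [e1, mul_comm (C * D), mul_div_mul_left]
  exact mul_ne_zero (mul_ne_zero hx1 hf) (mul_ne_zero hx2 hf)

lemma re_div_pos' (A B : ℂ) (hA : ‖A‖ ≤ 1/2) (hB : ‖B‖ ≤ 1/2) : 0 < ((1 + A) / (1 - B)).re := by
  have hA2 : A.re^2 + A.im^2 ≤ 1/4 := by
    have := Complex.sq_norm A
    rw [Complex.normSq_apply] at this
    nlinarith [norm_nonneg A]
  have hB2 : B.re^2 + B.im^2 ≤ 1/4 := by
    have := Complex.sq_norm B
    rw [Complex.normSq_apply] at this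
    nlinarith [norm_nonneg B]
  have a1 : 1/2 ≤ 1 + A.re := by nlinarith [sq_nonneg A.im]
  have b1 : 1/2 ≤ 1 - B.re := by nlinarith [sq_nonneg B.im]
  have a2 : |A.im| < 1 + A.re := abs_lt_of_sq_lt_sq (by nlinarith [sq_nonneg (A.re + 1/2)]) (by linarith)
  have b2 : |B.im| < 1 - B.re := abs_lt_of_sq_lt_sq (by nlinarith [sq_nonneg (B.re - 1/2)]) (by linarith)
  have hn : (1 - B) ≠ 0 := by
    intro h
    have := congrArg Complex.re h
    simp at this
    linarith
  have hpos := Complex.normSq_pos.2 hn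
  rw [Complex.div_re, ← add_div]
  apply div_pos _ hpos
  simp only [Complex.add_re, Complex.one_re, Complex.sub_re, Complex.add_im, Complex.one_im,
    Complex.sub_im]
  have h1 : |A.im| * |B.im| < (1 + A.re) * (1 - B.re) :=
    mul_lt_mul'' a2 b2 (abs_nonneg _) (abs_nonneg _)
  have h2 := le_abs_self (A.im * B.im)
  rw [abs_mul] at h2
  linarith

lemma series_deriv (t : ℕ → ℂ) (ht : Summable fun n : ℕ => ((n:ℝ) + 1) * ‖t n‖) (z : ℂ)
    (hz : z ∈ ball (0:ℂ) 1) :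
    HasDerivAt (fun z => ∑' n : ℕ, t n * z^(n+1)) (∑' n : ℕ, t n * (((n:ℂ) + 1) * z^n)) z := by
  refine hasDerivAt_tsum_of_isPreconnected (g := fun n z => t n * z^(n+1))
    (g' := fun n z => t n * (((n:ℂ) + 1) * z^n)) ht isOpen_ball (convex_ball (0:ℂ) 1).isPreconnected
    (y₀ := 0) ?_ ?_ (by simp) ?_ hz
  · intro n y _
    have := (hasDerivAt_pow (n+1) y).const_mul (t n)
    simpa using this
  · intro n y hy
    rw [mem_ball_zero_iff] at hy
    have e : ‖(n:ℂ)+1‖ = (n:ℝ)+1 := by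
      rw [← Nat.cast_add_one, Complex.norm_natCast]; push_cast; rfl
    rw [norm_mul, norm_mul, norm_pow, e]
    have : ‖y‖^n ≤ 1 := pow_le_one₀ (norm_nonneg _) hy.le
    have h0 := norm_nonneg (t n)
    calc ‖t n‖ * (((n:ℝ)+1) * ‖y‖^n) ≤ ‖t n‖ * (((n:ℝ)+1) * 1) := by gcongr
      _ = _ := by ring
  · simpa using summable_zero

lemma series_deriv_norm (t : ℕ → ℂ) (ht : Summable fun n : ℕ => ((n:ℝ) + 1) * ‖t n‖)
    (hle : ∑' n : ℕ, ((n:ℝ) + 1) * ‖t n‖ ≤ 1/2) (z : ℂ) (hz : z ∈ ball (0:ℂ) 1) :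
    ‖∑' n : ℕ, t n * (((n:ℂ) + 1) * z^n)‖ ≤ 1/2 := by
  refine (tsum_of_norm_bounded ht.hasSum fun n => ?_).trans hle
  rw [mem_ball_zero_iff] at hz
  have e : ‖(n:ℂ)+1‖ = (n:ℝ)+1 := by
    rw [← Nat.cast_add_one, Complex.norm_natCast]; push_cast; rfl
  rw [norm_mul, norm_mul, norm_pow, e]
  have : ‖z‖^n ≤ 1 := pow_le_one₀ (norm_nonneg _) hz.le
  have h0 := norm_nonneg (t n)
  calc ‖t n‖ * (((n:ℝ)+1) * ‖z‖^n) ≤ ‖t n‖ * (((n:ℝ)+1) * 1) := by gcongr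
    _ = _ := by ring

lemma starlike_of_deriv (g g' : ℂ → ℂ) (h0 : g 0 = 0)
    (hd : ∀ z ∈ ball (0:ℂ) 1, HasDerivAt g (g' z) z)
    (hb : ∀ z ∈ ball (0:ℂ) 1, ‖g' z‖ ≤ 1/2) : UniformlyStarlikeOnDisk (fun z => z) g := by
  have main : ∀ z ∈ ball (0:ℂ) 1, ∀ ζ ∈ ball (0:ℂ) 1, z ≠ ζ →
    0 < (((z + conj (g z)) - (ζ + conj (g ζ)))
        / ((z - ζ) * 1 - conj (z - ζ) * conj (g' z))).re := by
    intro z hz ζ hζ hne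
    have hw : z - ζ ≠ 0 := sub_ne_zero.2 hne
    have lip : ‖g z - g ζ‖ ≤ 1/2 * ‖z - ζ‖ :=
      (convex_ball (0:ℂ) 1).norm_image_sub_le_of_norm_hasDerivWithin_le
        (fun x hx => (hd x hx).hasDerivWithinAt) hb hζ hz
    have hwn : 0 < ‖z - ζ‖ := norm_pos_iff.2 hw
    have := re_div_pos' (conj (g z - g ζ) / (z - ζ)) (conj (z - ζ) * conj (g' z) / (z - ζ))
      (by rw [norm_div, Complex.norm_conj, div_le_iff₀ hwn]; exact lip)
      (by rw [norm_div, norm_mul, Complex.norm_conj, Complex.norm_conj, div_le_iff₀ hwn]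
          nlinarith [hb z hz])
    convert this using 2
    rw [← mul_div_mul_left (1 + conj (g z - g ζ) / (z - ζ)) _ hw]
    congr 1
    · field_simp
      rw [map_sub]; ring
    · field_simp
  refine ⟨by simp [h0], ?_, ?_, ?_⟩
  · intro z hz
    rw [(hd z hz).deriv]
    have := hb z hz
    simp
    linarith
  · intro z hz ζ hζ hne
    rw [(hd z hz).deriv]
    simpa using (main z hz ζ hζ hne).le
  · intro z hz hne
    rw [(hd z hz).deriv]
    simpa [h0] using main z hz 0 (by simp) hne

lemma poch_eq_uco (a b : ℂ) (s p c : ℝ) (hab : a + b = s) (hp : a * b = p) (n : ℕ) :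
    poch a n * poch b n / (poch c n * (Nat.factorial n : ℂ)) = (uco s p c n : ℂ) := by
  induction n with
  | zero => simp [poch, uco]
  | succ n ih =>
    rw [uco_succ]
    push_cast
    rw [← ih]
    simp only [poch, ascPochhammer_succ_eval, Nat.factorial_succ]
    push_cast
    rw [div_mul_div_comm]
    rw [← hab, ← hp]
    congr 1 <;> ring

/-- Theorem 5(c): under the stated conditions on `a, b, c, α`, the
coefficients of `g₃(z) = (α/2) ∫₀ᶻ F(a,b;c;t) dt` satisfy `∑_{n≥1} n|bₙ| ≤ 1/2`;
consequently `f₃(z) = z + conj(g₃(z))` is uniformly starlike in `𝔻`. -/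
theorem hypergeom_uniformly_starlike_c (a b : ℂ)
    (hab : (∃ a' b' : ℝ, a = (a' : ℂ) ∧ b = (b' : ℂ) ∧ -1 < a' ∧ -1 < b' ∧ 0 < a' * b') ∨
           (a ≠ 0 ∧ b ≠ 0 ∧ b = conj a))
    (c : ℝ) (hc : 0 < c) (hc1 : (a + b).re < c)
    (α : ℂ) (hα : ‖α‖ < 1)
    (hQ : ∃ q : ℝ, 0 < q ∧ q ≤ 1 ∧
      (q : ℂ) = (‖α‖ : ℂ) * (Complex.Gamma (c : ℂ) * Complex.Gamma ((c : ℂ) - a - b)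
          / (Complex.Gamma ((c : ℂ) - a) * Complex.Gamma ((c : ℂ) - b)))) :
    (Summable fun n : ℕ => ((n + 1 : ℝ)) * ‖bc3 a b (c : ℂ) α n‖) ∧
    (∑' n : ℕ, ((n + 1 : ℝ)) * ‖bc3 a b (c : ℂ) α n‖) ≤ 1 / 2 ∧
    UniformlyStarlikeOnDisk (fun z => z)
      (fun z => α / 2 * hypFPrim a b (c : ℂ) z) := by
  obtain ⟨s, p, hs, hp, h, h', hca, hcb⟩ : ∃ s p : ℝ, a + b = s ∧ a * b = p ∧
      (∀ n : ℕ, 0 ≤ (n:ℝ)^2 + s * n + p) ∧ (∀ k : ℕ, 0 ≤ (c+k)^2 - s * (c+k) + p) ∧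
      a.re < c ∧ b.re < c := by
    rcases hab with ⟨x, y, rfl, rfl, hx, hy, hxy⟩ | ⟨ha, hb, rfl⟩
    · have hc2 : x + y < c := by simpa using hc1
      have hcx : x < c ∧ y < c := by
        rcases pos_and_pos_or_neg_and_neg_of_mul_pos hxy with ⟨h1, h2⟩ | ⟨h1, h2⟩ <;>
          constructor <;> linarith
      refine ⟨x + y, x * y, by push_cast; rfl, by push_cast; rfl, ?_, ?_, by simpa using hcx.1,
        by simpa using hcx.2⟩
      · intro n
        rcases Nat.eq_zero_or_pos n with rfl | hn
        · simpa using hxy.le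
        · have : (1:ℝ) ≤ n := by exact_mod_cast hn
          nlinarith [mul_nonneg (by linarith : 0 ≤ (n:ℝ) + x) (by linarith : 0 ≤ (n:ℝ) + y)]
      · intro k
        have : (0:ℝ) ≤ k := by positivity
        nlinarith [mul_nonneg (by linarith : 0 ≤ c + k - x) (by linarith : 0 ≤ c + k - y)]
    · have hc2 : 2 * a.re < c := by
        simp at hc1; linarith
      have hr : a.re < c := by
        rcases le_or_gt a.re 0 with h | h <;> linarith
      refine ⟨2 * a.re, Complex.normSq a, ?_, Complex.mul_conj a, ?_, ?_, hr, by simpa using hr⟩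
      · rw [Complex.add_conj]
      · intro n
        rw [Complex.normSq_apply]
        nlinarith [sq_nonneg ((n:ℝ) + a.re), sq_nonneg a.im]
      · intro k
        rw [Complex.normSq_apply]
        nlinarith [sq_nonneg (c + (k:ℝ) - a.re), sq_nonneg a.im]
  have hsc : s < c := by rw [hs] at hc1; simpa using hc1
  obtain ⟨q, hq0, hq1, hq⟩ := hQ
  have hlim := gprod_tendsto a b s p c hs hp hca hcb
  set Q := Complex.Gamma (c : ℂ) * Complex.Gamma ((c : ℂ) - a - b)
          / (Complex.Gamma ((c : ℂ) - a) * Complex.Gamma ((c : ℂ) - b)) with hQdef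
  have hlim' : Filter.Tendsto (fun m => gprod s p c m) Filter.atTop (nhds Q.re) := by
    simpa [Function.comp_def] using (Complex.continuous_re.tendsto Q).comp hlim
  have hqr : q = ‖α‖ * Q.re := by
    have := congrArg Complex.re hq
    simpa using this
  have hpart := usum_le_limit s p c Q.re hc hsc h h' hlim'
  have hun := uco_nonneg s p c hc h
  have hsum : Summable (uco s p c) := summable_of_sum_range_le hun hpart
  have hts : ∑' n, uco s p c n ≤ Q.re := Real.tsum_le_of_sum_range_le hun hpart
  have hbc : ∀ n : ℕ, bc3 a b (c:ℂ) α n = α / 2 * (uco s p c n : ℂ) / ((n:ℂ)+1) := by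
    intro n
    rw [← poch_eq_uco a b s p c hs hp, bc3]
    field_simp
  have hterm : (fun n : ℕ => ((n + 1 : ℝ)) * ‖bc3 a b (c : ℂ) α n‖)
      = fun n => ‖α‖ / 2 * uco s p c n := by
    funext n
    have e : ‖(n:ℂ)+1‖ = (n:ℝ)+1 := by
      rw [← Nat.cast_add_one, Complex.norm_natCast]; push_cast; rfl
    rw [hbc, norm_div, norm_mul, norm_div, e, Complex.norm_real, Real.norm_of_nonneg (hun n)]
    have : (n:ℝ) + 1 ≠ 0 := by positivity
    simp
    field_simp
  have S1 : Summable fun n : ℕ => ((n + 1 : ℝ)) * ‖bc3 a b (c : ℂ) α n‖ := by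
    rw [hterm]; exact hsum.mul_left _
  have S2 : (∑' n : ℕ, ((n + 1 : ℝ)) * ‖bc3 a b (c : ℂ) α n‖) ≤ 1 / 2 := by
    rw [hterm, tsum_mul_left]
    have := mul_le_mul_of_nonneg_left hts (norm_nonneg α)
    linarith
  refine ⟨S1, S2, ?_⟩
  have hg : (fun z => α / 2 * hypFPrim a b (c : ℂ) z)
      = fun z => ∑' n : ℕ, bc3 a b (c:ℂ) α n * z^(n+1) := by
    funext z
    rw [hypFPrim, ← tsum_mul_left]
    refine tsum_congr fun n => ?_
    rw [bc3]; ring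
  rw [hg]
  exact starlike_of_deriv _ _ (by simp) (series_deriv _ S1) (series_deriv_norm _ S1 S2)
end
end

section
/- Let a, b satisfy either a, b \in (-1,\infty) with ab > 0, or a, b \in \mathbb{C} \setminus \{0\} with b = \overline{a}; let c be a positive real number with c > \mathrm{Re}(a+b) + 2, and let \alpha \in \mathbb{C} with |\alpha| < 1. If |\alpha| \cdot \frac{\Gamma(c)\Gamma(c-a-b)}{\Gamma(c-a)\Gamma(c-b)} \left[\frac{2(a)_2 (b)_2}{(c-a-b-2)_2} + \frac{5ab}{c-a-b-1} + 1\right] \leq 2 (this quantity being a positive real number), then the Taylor coefficients b_n = \frac{\alpha}{2} \frac{(a)_{n-1}(b)_{n-1}}{(c)_{n-1}(n-1)!} of g_1(z) = (\alpha/2)\, z\, F(a,b;c;z) satisfy \sum_{n=1}^{\infty} n(2n-1)|b_n| \leq 1; consequently f_1(z) = z + \overline{(\alpha/2)\, z\, F(a,b;c;z)} is uniformly convex in \mathbb{D}. -/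
open Complex Metric ComplexConjugate

noncomputable section

/-- The Gaussian hypergeometric function `F(a,b;c;z) = ∑ (a)ₙ(b)ₙ/((c)ₙ n!) zⁿ`. -/
def hypF (a b c z : ℂ) : ℂ :=
  ∑' n : ℕ, poch a n * poch b n / (poch c n * (Nat.factorial n : ℂ)) * z ^ n

/-- The necessary and sufficient condition (due to Kanas–Ponnusamy–Sairam) for a
sense-preserving harmonic mapping `f = h + conj g` to be uniformly convex in the unit
disk, taken here as the formal definition of "uniformly convex in `𝔻`". -/
def UniformlyConvexOnDisk (h g : ℂ → ℂ) : Prop :=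
  ∀ z ∈ ball (0:ℂ) 1, ∀ ζ ∈ ball (0:ℂ) 1, z ≠ ζ →
    0 ≤ (((z - ζ) * deriv h z + (z - ζ) ^ 2 * deriv (deriv h) z
          + conj ((z - ζ) * deriv g z) + conj ((z - ζ) ^ 2 * deriv (deriv g) z))
        / ((z - ζ) * deriv h z - conj ((z - ζ) * deriv g z))).re

/-- The Taylor coefficient `b_{n+1} = (α/2) (a)ₙ(b)ₙ/((c)ₙ n!)` of
`g₁(z) = (α/2) z F(a,b;c;z)`. -/
def bc1 (a b c α : ℂ) (n : ℕ) : ℂ :=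
  α / 2 * (poch a n * poch b n) / (poch c n * (Nat.factorial n : ℂ))

/-- Real form of the hypergeometric coefficient in terms of `s = a + b`, `p = a b`. -/
def hA (s p c : ℝ) (n : ℕ) : ℝ :=
  ∏ k ∈ Finset.range n, (((k:ℝ)^2 + s * k + p) / ((c + k) * (k + 1)))

lemma hA_succ (s p c : ℝ) (hc : 0 < c) (n : ℕ) :
    hA s p c (n+1) * ((c + n) * (n + 1)) = hA s p c n * ((n:ℝ)^2 + s * n + p) := by
  unfold hA
  rw [Finset.prod_range_succ]
  have h1 : (c + n) ≠ 0 := by positivity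
  have h2 : ((n:ℝ) + 1) ≠ 0 := by positivity
  field_simp

lemma hA_nonneg (s p c : ℝ) (hc : 0 < c) (hk : ∀ k : ℕ, 0 ≤ (k:ℝ)^2 + s * k + p) (n : ℕ) :
    0 ≤ hA s p c n := by
  unfold hA
  refine Finset.prod_nonneg fun k _ => ?_
  have := hk k
  positivity

lemma tele1 (s p c : ℝ) (hc : 0 < c) (N : ℕ) :
    ∑ n ∈ Finset.range N, ((c - 1 - s) * n - p) * hA s p c n
      = - (N * (N - 1 + c) * hA s p c N) := by
  induction N with
  | zero => simp
  | succ N ih =>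
    rw [Finset.sum_range_succ, ih]
    have := hA_succ s p c hc N
    push_cast
    linear_combination this

lemma tele2 (s p c : ℝ) (hc : 0 < c) (N : ℕ) :
    ∑ n ∈ Finset.range N, ((c - 2 - s) * (n:ℝ)^2 - (p + c - 1) * n) * hA s p c n
      = - ((N - 1) * (N * (N - 1 + c) * hA s p c N)) := by
  induction N with
  | zero => simp
  | succ N ih =>
    rw [Finset.sum_range_succ, ih]
    have := hA_succ s p c hc N
    push_cast
    linear_combination N * this

lemma tele3 (s p c : ℝ) (hc : 0 < c) (N : ℕ) :
    ∑ n ∈ Finset.range N, (((c - s) * n - p) / (c + n)) * hA s p c n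
      = - (N * hA s p c N) := by
  induction N with
  | zero => simp
  | succ N ih =>
    rw [Finset.sum_range_succ, ih]
    have := hA_succ s p c hc N
    have h1 : (c + N) ≠ 0 := by positivity
    push_cast
    field_simp
    linear_combination this

lemma T_nonneg (s p c : ℝ) (hc : 0 < c)
    (hk : ∀ k : ℕ, 0 ≤ (k:ℝ)^2 + s * k + p) (N : ℕ) :
    0 ≤ N * (N - 1 + c) * hA s p c N := by
  have := hA_nonneg s p c hc hk N
  rcases N with _ | N
  · simp
  · push_cast
    have : (N:ℝ) + 1 - 1 + c = N + c := by ring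
    rw [this]; positivity

lemma summ0 (s p c : ℝ) (hc : 0 < c) (hp : 0 < p) (hcs : s + 2 < c)
    (hk : ∀ k : ℕ, 0 ≤ (k:ℝ)^2 + s * k + p) : Summable (hA s p c) := by
  obtain ⟨M, hM⟩ := exists_nat_ge (p + 1)
  have hn := hA_nonneg s p c hc hk
  refine summable_of_sum_range_le (c := (p+1) * ∑ n ∈ Finset.range M, hA s p c n) hn fun N => ?_
  have h1 := tele1 s p c hc N
  have h2 := T_nonneg s p c hc hk N
  have h3 : ∑ n ∈ Finset.range N, hA s p c n ≤
      ∑ n ∈ Finset.range N, (((c - 1 - s) * n - p) * hA s p c n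
        + (p + 1) * (if n < M then hA s p c n else 0)) := by
    refine Finset.sum_le_sum fun n _ => ?_
    have h0 := hn n
    have hn0 : (0:ℝ) ≤ n := by positivity
    split_ifs with h
    · have : 0 ≤ (c - 1 - s) * n := mul_nonneg (by linarith) hn0
      nlinarith [mul_nonneg this h0]
    · have h5 : (M:ℝ) ≤ n := by exact_mod_cast (not_lt.mp h)
      have : 0 ≤ (c - 2 - s) * n := mul_nonneg (by linarith) hn0
      have h6 : 0 ≤ (c - 1 - s) * n - p - 1 := by nlinarith
      nlinarith [mul_nonneg h6 h0]
  rw [Finset.sum_add_distrib, h1, ← Finset.mul_sum, ← Finset.sum_filter] at h3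
  have h4 : ∑ n ∈ (Finset.range N).filter (fun n => n < M), hA s p c n
      ≤ ∑ n ∈ Finset.range M, hA s p c n := by
    refine Finset.sum_le_sum_of_subset_of_nonneg ?_ (fun i _ _ => hn i)
    intro x hx
    simp at hx ⊢
    exact hx.2
  nlinarith

lemma main_sum (s p c : ℝ) (hc : 0 < c) (hp : 0 < p) (hcs : s + 2 < c)
    (hk : ∀ k : ℕ, 0 ≤ (k:ℝ)^2 + s * k + p) :
    Summable (fun n : ℕ => (((n + 1) * (2 * (n + 1) - 1) : ℝ)) * hA s p c n) ∧
    ∑' n : ℕ, (((n + 1) * (2 * (n + 1) - 1) : ℝ)) * hA s p c n ≤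
      (2 * (p * (1 + s + p)) / ((c - s - 2) * (c - s - 1)) + 5 * p / (c - s - 1) + 1)
        * ∑' n, hA s p c n := by
  have hn := hA_nonneg s p c hc hk
  have key : ∀ N, ∑ n ∈ Finset.range N, (((n + 1) * (2 * (n + 1) - 1) : ℝ)) * hA s p c n ≤
      (2 * (p * (1 + s + p)) / ((c - s - 2) * (c - s - 1)) + 5 * p / (c - s - 1) + 1)
        * ∑' n, hA s p c n := by
    intro N
    have hT := T_nonneg s p c hc hk N
    have hT2 : 0 ≤ ((N:ℝ) - 1) * (N * (N - 1 + c) * hA s p c N) := by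
      rcases N with _ | N
      · simp
      · exact mul_nonneg (by push_cast; linarith [Nat.cast_nonneg (α := ℝ) N]) hT
    have h1 := tele1 s p c hc N
    have h2 := tele2 s p c hc N
    have h0 : ∑ n ∈ Finset.range N, hA s p c n ≤ ∑' n, hA s p c n :=
      (summ0 s p c hc hp hcs hk).sum_le_tsum _ (fun i _ => hn i)
    set X := ∑ n ∈ Finset.range N, hA s p c n with hX
    set Y := ∑ n ∈ Finset.range N, (n:ℝ) * hA s p c n with hY
    set Z := ∑ n ∈ Finset.range N, (n:ℝ)^2 * hA s p c n with hZ
    have e1 : ∑ n ∈ Finset.range N, ((c - 1 - s) * n - p) * hA s p c n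
        = (c - 1 - s) * Y - p * X := by
      rw [hX, hY, Finset.mul_sum, Finset.mul_sum, ← Finset.sum_sub_distrib]
      exact Finset.sum_congr rfl fun n _ => by ring
    have e2 : ∑ n ∈ Finset.range N, ((c - 2 - s) * (n:ℝ)^2 - (p + c - 1) * n) * hA s p c n
        = (c - 2 - s) * Z - (p + c - 1) * Y := by
      rw [hZ, hY, Finset.mul_sum, Finset.mul_sum, ← Finset.sum_sub_distrib]
      exact Finset.sum_congr rfl fun n _ => by ring
    have e3 : ∑ n ∈ Finset.range N, (((n + 1) * (2 * (n + 1) - 1) : ℝ)) * hA s p c n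
        = 2 * (Z - Y) + 5 * Y + X := by
      rw [hX, hZ, hY, ← Finset.sum_sub_distrib, Finset.mul_sum, Finset.mul_sum,
        ← Finset.sum_add_distrib, ← Finset.sum_add_distrib]
      exact Finset.sum_congr rfl fun n _ => by ring
    rw [e3]
    have d1 : 0 < c - s - 1 := by linarith
    have d2 : 0 < c - s - 2 := by linarith
    have hr : 0 ≤ 1 + s + p := by have := hk 1; norm_num at this; linarith
    have y1 : Y ≤ p * X / (c - s - 1) := by
      rw [le_div_iff₀ d1]; linarith
    have z1 : Z - Y ≤ (1 + s + p) * Y / (c - s - 2) := by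
      rw [le_div_iff₀ d2]; linarith
    have z2 : (1 + s + p) * Y / (c - s - 2)
        ≤ (1 + s + p) * (p * X / (c - s - 1)) / (c - s - 2) := by gcongr
    have hfin : 2 * (Z - Y) + 5 * Y + X ≤
      (2 * (p * (1 + s + p)) / ((c - s - 2) * (c - s - 1)) + 5 * p / (c - s - 1) + 1) * X := by
      have e : (2 * (p * (1 + s + p)) / ((c - s - 2) * (c - s - 1)) + 5 * p / (c - s - 1) + 1) * X
        = 2 * ((1 + s + p) * (p * X / (c - s - 1)) / (c - s - 2)) + 5 * (p * X / (c - s - 1)) + X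
          := by
        field_simp
      rw [e]; linarith
    refine hfin.trans (mul_le_mul_of_nonneg_left h0 (by positivity))
  have hnn : ∀ n : ℕ, 0 ≤ (((n + 1) * (2 * (n + 1) - 1) : ℝ)) * hA s p c n := by
    intro n
    have := hn n
    have h : (0:ℝ) ≤ 2 * (n + 1) - 1 := by linarith [Nat.cast_nonneg (α := ℝ) n]
    positivity
  exact ⟨summable_of_sum_range_le hnn key, Real.tsum_le_of_sum_range_le hnn key⟩

lemma hA_shift (s p c : ℝ) (hc : 0 < c) (n : ℕ) :
    hA s p (c+1) n * (c + n) = hA s p c n * c := by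
  induction n with
  | zero => simp [hA]
  | succ n ih =>
    have h1 := hA_succ s p c hc n
    have h2 := hA_succ s p (c+1) (by linarith) n
    have e1 : (c + n) ≠ 0 := by positivity
    have e2 : ((n:ℝ) + 1) ≠ 0 := by positivity
    have : (c + n) * (n + 1) ≠ 0 := mul_ne_zero e1 e2
    apply mul_right_cancel₀ this
    push_cast
    linear_combination (c+n) * h2 - c * h1 + (n^2 + s*n+p) * ih

lemma contig (s p c : ℝ) (hc : 0 < c) (hp : 0 < p) (hcs : s + 2 < c)
    (hk : ∀ k : ℕ, 0 ≤ (k:ℝ)^2 + s * k + p) :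
    ∑' n, hA s p c n ≤ ((c^2 - s * c + p) / (c * (c - s))) * ∑' n, hA s p (c+1) n := by
  have hn := hA_nonneg s p c hc hk
  have hn' := hA_nonneg s p (c+1) (by linarith) hk
  have d : 0 < c - s := by linarith
  have d' : 0 < c^2 - s * c + p := by nlinarith [mul_pos hc d]
  refine Real.tsum_le_of_sum_range_le hn fun N => ?_
  have h0 : ∑ n ∈ Finset.range N, hA s p (c+1) n ≤ ∑' n, hA s p (c+1) n :=
    (summ0 s p (c+1) (by linarith) hp (by linarith) hk).sum_le_tsum _ (fun i _ => hn' i)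
  refine le_trans ?_ (mul_le_mul_of_nonneg_left h0 (by positivity))
  have h3 := tele3 s p c hc N
  have h4 : 0 ≤ (N:ℝ) * hA s p c N := mul_nonneg (by positivity) (hn N)
  have e : ∑ n ∈ Finset.range N, (((c - s) * n - p) / (c + n)) * hA s p c n
     = (c - s) * ∑ n ∈ Finset.range N, hA s p c n
       - (c^2 - s * c + p) / c * ∑ n ∈ Finset.range N, hA s p (c+1) n := by
    rw [Finset.mul_sum, Finset.mul_sum, ← Finset.sum_sub_distrib]
    refine Finset.sum_congr rfl fun n _ => ?_
    have h1 : (c + n) ≠ 0 := by positivity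
    have : hA s p (c+1) n = hA s p c n * c / (c + n) := by
      rw [eq_div_iff h1]; exact hA_shift s p c hc n
    rw [this]
    field_simp
    ring
  have : (c - s) * ∑ n ∈ Finset.range N, hA s p c n
    ≤ (c^2 - s * c + p) / c * ∑ n ∈ Finset.range N, hA s p (c+1) n := by linarith
  calc _ ≤ ((c^2 - s * c + p) / c * ∑ n ∈ Finset.range N, hA s p (c+1) n) / (c - s) := by
        rw [le_div_iff₀ d]; linarith
    _ = _ := by field_simp

lemma hA_decay (s p c : ℝ) (hc : 0 < c)
    (hk : ∀ k : ℕ, 0 ≤ (k:ℝ)^2 + s * k + p) (N n : ℕ) :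
    hA s p (c + N) (n+1) ≤ c / (c + N) * hA s p c (n+1) := by
  induction N with
  | zero => simp [hc.ne']
  | succ N ih =>
    have hcN : 0 < c + N := by positivity
    have h := hA_shift s p (c+N) hcN (n+1)
    have h0 := hA_nonneg s p (c+N+1) (by linarith) hk (n+1)
    have h1 : hA s p (c + N + 1) (n+1) * (c + N + 1) ≤ hA s p (c+N) (n+1) * (c+N) := by
      rw [← h]
      refine mul_le_mul_of_nonneg_left ?_ h0
      push_cast; linarith [Nat.cast_nonneg (α := ℝ) n]
    have h2 : hA s p (c+N) (n+1) * (c+N) ≤ c * hA s p c (n+1) := by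
      calc _ ≤ (c / (c + N) * hA s p c (n+1)) * (c+N) := by gcongr
        _ = _ := by field_simp
    push_cast
    rw [← add_assoc, div_mul_eq_mul_div, le_div_iff₀ (by linarith)]
    linarith

lemma F_decay (s p c : ℝ) (hc : 0 < c) (hp : 0 < p) (hcs : s + 2 < c)
    (hk : ∀ k : ℕ, 0 ≤ (k:ℝ)^2 + s * k + p) (N : ℕ) :
    ∑' n, hA s p (c+N) n ≤ 1 + c / (c + N) * ∑' n, hA s p c (n+1) := by
  have hN : (0:ℝ) ≤ N := by positivity
  have S1 := summ0 s p (c+N) (by linarith) hp (by linarith) hk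
  have S0 := summ0 s p c hc hp hcs hk
  rw [S1.tsum_eq_zero_add, ← tsum_mul_left]
  have : hA s p (c+N) 0 = 1 := by simp [hA]
  rw [this]
  gcongr
  · exact (summable_nat_add_iff 1).2 S1
  · exact ((summable_nat_add_iff 1).2 S0).mul_left _
  · exact hA_decay s p c hc hk N _

/-- Partial product of the Gauss value. -/
def gP (s p c : ℝ) (N : ℕ) : ℝ :=
  ∏ k ∈ Finset.range N, (((c+k)^2 - s * (c+k) + p) / ((c+k) * (c + k - s)))

lemma gP_nonneg (s p c : ℝ) (hc : 0 < c) (hp : 0 < p) (hcs : s + 2 < c) (N : ℕ) :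
    0 ≤ gP s p c N := by
  refine Finset.prod_nonneg fun k _ => ?_
  have h0 : (0:ℝ) ≤ k := by positivity
  have h1 : 0 < c + k - s := by linarith
  have h2 : 0 < c + k := by linarith
  have : 0 < (c+k)^2 - s * (c+k) + p := by nlinarith [mul_pos h1 h2]
  positivity

lemma F_iter (s p c : ℝ) (hc : 0 < c) (hp : 0 < p) (hcs : s + 2 < c)
    (hk : ∀ k : ℕ, 0 ≤ (k:ℝ)^2 + s * k + p) (N : ℕ) :
    ∑' n, hA s p c n ≤ gP s p c N * ∑' n, hA s p (c+N) n := by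
  induction N with
  | zero => simp [gP]
  | succ N ih =>
    have hN : (0:ℝ) ≤ N := by positivity
    have h := contig s p (c+N) (by linarith) hp (by linarith) hk
    refine ih.trans ((mul_le_mul_of_nonneg_left h (gP_nonneg s p c hc hp hcs N)).trans_eq ?_)
    unfold gP
    rw [Finset.prod_range_succ]
    push_cast
    rw [← add_assoc]
    ring

lemma F_le (s p c : ℝ) (hc : 0 < c) (hp : 0 < p) (hcs : s + 2 < c)
    (hk : ∀ k : ℕ, 0 ≤ (k:ℝ)^2 + s * k + p) (g : ℝ)
    (hg : Filter.Tendsto (fun N => gP s p c (N+1)) Filter.atTop (nhds g)) :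
    ∑' n, hA s p c n ≤ g := by
  have hg' : Filter.Tendsto (gP s p c) Filter.atTop (nhds g) :=
    (Filter.tendsto_add_atTop_iff_nat 1).1 hg
  have h1 : Filter.Tendsto (fun N : ℕ => c / (c + (N:ℝ))) Filter.atTop (nhds 0) :=
    Filter.Tendsto.const_div_atTop
      (Filter.tendsto_atTop_add_const_left _ _ tendsto_natCast_atTop_atTop) _
  have h2 := hg'.mul ((h1.mul_const (∑' n, hA s p c (n+1))).const_add 1)
  simp only [zero_mul, add_zero, mul_one] at h2
  refine ge_of_tendsto' h2 fun N => ?_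
  exact (F_iter s p c hc hp hcs hk N).trans
    (mul_le_mul_of_nonneg_left (F_decay s p c hc hp hcs hk N) (gP_nonneg s p c hc hp hcs N))

lemma gP_tendsto (a b : ℂ) (s p c : ℝ) (hs : a + b = s) (hp : a * b = p)
    (h1 : 0 < c) (h2 : s + 2 < c) (ha : 0 < ((c:ℂ) - a).re) (hb : 0 < ((c:ℂ) - b).re) :
    Filter.Tendsto (fun N => ((gP s p c (N+1) : ℝ) : ℂ)) Filter.atTop
      (nhds (Complex.Gamma (c : ℂ) * Complex.Gamma ((c : ℂ) - a - b)
          / (Complex.Gamma ((c : ℂ) - a) * Complex.Gamma ((c : ℂ) - b)))) := by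
  have T := ((GammaSeq_tendsto_Gamma (c:ℂ)).mul (GammaSeq_tendsto_Gamma ((c:ℂ) - a - b))).div
    ((GammaSeq_tendsto_Gamma ((c:ℂ) - a)).mul (GammaSeq_tendsto_Gamma ((c:ℂ) - b)))
    (mul_ne_zero (Gamma_ne_zero_of_re_pos ha) (Gamma_ne_zero_of_re_pos hb))
  refine T.congr' ?_
  filter_upwards [Filter.eventually_ge_atTop 1] with n hn
  have hn0 : (n:ℂ) ≠ 0 := by exact_mod_cast (by omega : n ≠ 0)
  have hf : (n.factorial : ℂ) ≠ 0 := by exact_mod_cast n.factorial_ne_zero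
  have ne : ∀ (x : ℂ), 0 < x.re → ∀ j : ℕ, x + j ≠ 0 := by
    intro x hx j h
    have := congrArg Complex.re h
    simp at this
    linarith [Nat.cast_nonneg (α := ℝ) j]
  have P : ∀ (x : ℂ), 0 < x.re → ∏ j ∈ Finset.range (n+1), (x + j) ≠ 0 := fun x hx =>
    Finset.prod_ne_zero_iff.2 fun j _ => ne x hx j
  have hcs : (c:ℂ) - a - b = ((c - s : ℝ) : ℂ) := by push_cast; rw [← hs]; ring
  have r1 : 0 < (c:ℂ).re := by simpa using h1
  have r2 : 0 < ((c:ℂ) - a - b).re := by rw [hcs, ofReal_re]; linarith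
  have Q : ((gP s p c (n+1) : ℝ) : ℂ) =
      ((∏ j ∈ Finset.range (n+1), ((c:ℂ) - a + j)) * (∏ j ∈ Finset.range (n+1), ((c:ℂ) - b + j)))
      / ((∏ j ∈ Finset.range (n+1), ((c:ℂ) + j)) *
        (∏ j ∈ Finset.range (n+1), ((c:ℂ) - a - b + j))) := by
    unfold gP
    rw [← Finset.prod_mul_distrib, ← Finset.prod_mul_distrib, ← Finset.prod_div_distrib]
    push_cast
    refine Finset.prod_congr rfl fun j _ => ?_
    rw [← hs, ← hp]
    congr 1 <;> ring
  have hpow : (n:ℂ) ^ (c:ℂ) * (n:ℂ) ^ ((c:ℂ) - a - b) = (n:ℂ) ^ ((c:ℂ) - a) * (n:ℂ) ^ ((c:ℂ) - b) := by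
    rw [← cpow_add _ _ hn0, ← cpow_add _ _ hn0]; congr 1; ring
  have z1 : (n:ℂ) ^ ((c:ℂ) - a) ≠ 0 := by simp [cpow_eq_zero_iff, hn0]
  have z2 : (n:ℂ) ^ ((c:ℂ) - b) ≠ 0 := by simp [cpow_eq_zero_iff, hn0]
  rw [Q]
  simp only [Pi.div_apply, GammaSeq]
  have p1 := P _ r1
  have p2 := P _ r2
  have p3 := P _ ha
  have p4 := P _ hb
  generalize ∏ j ∈ Finset.range (n+1), ((c:ℂ) + j) = x1 at *
  generalize ∏ j ∈ Finset.range (n+1), ((c:ℂ) - a - b + j) = x2 at *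
  generalize ∏ j ∈ Finset.range (n+1), ((c:ℂ) - a + j) = x3 at *
  generalize ∏ j ∈ Finset.range (n+1), ((c:ℂ) - b + j) = x4 at *
  generalize (n:ℂ) ^ (c:ℂ) = y1 at *
  generalize (n:ℂ) ^ ((c:ℂ) - a - b) = y2 at *
  generalize (n:ℂ) ^ ((c:ℂ) - a) = y3 at *
  generalize (n:ℂ) ^ ((c:ℂ) - b) = y4 at *
  rw [div_eq_div_iff (by positivity) (by positivity)]
  field_simp
  linear_combination hpow

lemma poch_prod (x : ℂ) (n : ℕ) : poch x n = ∏ k ∈ Finset.range n, (x + k) := by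
  unfold poch
  induction n with
  | zero => simp
  | succ n ih => rw [ascPochhammer_succ_eval, ih, Finset.prod_range_succ]

lemma coef_eq (a b : ℂ) (s p c : ℝ) (hs : a + b = s) (hp : a * b = p) (n : ℕ) :
    poch a n * poch b n / (poch (c:ℂ) n * (n.factorial : ℂ)) = ((hA s p c n : ℝ) : ℂ) := by
  rw [poch_prod, poch_prod, poch_prod, ← Finset.prod_range_add_one_eq_factorial]
  unfold hA
  push_cast
  rw [← Finset.prod_mul_distrib, ← Finset.prod_mul_distrib, ← Finset.prod_div_distrib]
  refine Finset.prod_congr rfl fun j _ => ?_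
  rw [← hs, ← hp]
  congr 1; ring

lemma unif_convex (f : ℕ → ℂ)
    (hS : Summable fun n : ℕ => (((n + 1) * (2 * (n + 1) - 1) : ℝ)) * ‖f n‖)
    (hle : ∑' n : ℕ, (((n + 1) * (2 * (n + 1) - 1) : ℝ)) * ‖f n‖ ≤ 1) :
    UniformlyConvexOnDisk (fun z => z) (fun z => ∑' n, f n * z ^ (n+1)) := by
  have hS1 : Summable fun n : ℕ => ((n:ℝ) + 1) * ‖f n‖ := by
    refine hS.of_nonneg_of_le (fun n => by positivity) fun n => ?_
    gcongr
    have := Nat.cast_nonneg (α := ℝ) n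
    nlinarith
  have hS2 : Summable fun n : ℕ => ((n:ℝ) + 1) * n * ‖f n‖ := by
    refine hS.of_nonneg_of_le (fun n => by positivity) fun n => ?_
    gcongr
    have := Nat.cast_nonneg (α := ℝ) n
    linarith
  have b1 : ∀ n : ℕ, ∀ y ∈ ball (0:ℂ) 1, ‖f n * (((n+1 : ℕ):ℂ) * y ^ n)‖ ≤ ((n:ℝ) + 1) * ‖f n‖ := by
    intro n y hy
    have hy : ‖y‖ ≤ 1 := by simpa using (mem_ball_zero_iff.1 hy).le
    rw [norm_mul, norm_mul, norm_pow, Complex.norm_natCast]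
    push_cast
    have : ‖y‖ ^ n ≤ 1 := pow_le_one₀ (norm_nonneg _) hy
    calc _ ≤ ‖f n‖ * (((n:ℝ)+1) * 1) := by gcongr
      _ = _ := by ring
  have b2 : ∀ n : ℕ, ∀ y ∈ ball (0:ℂ) 1,
      ‖f n * (((n+1 : ℕ):ℂ) * ((n:ℂ) * y ^ (n-1)))‖ ≤ ((n:ℝ) + 1) * n * ‖f n‖ := by
    intro n y hy
    have hy : ‖y‖ ≤ 1 := by simpa using (mem_ball_zero_iff.1 hy).le
    rw [norm_mul, norm_mul, norm_mul, norm_pow, Complex.norm_natCast, Complex.norm_natCast]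
    push_cast
    have : ‖y‖ ^ (n-1) ≤ 1 := pow_le_one₀ (norm_nonneg _) hy
    calc _ ≤ ‖f n‖ * (((n:ℝ)+1) * (n * 1)) := by gcongr
      _ = _ := by ring
  have h0 : (0:ℂ) ∈ ball (0:ℂ) 1 := by simp
  have hpc : IsPreconnected (ball (0:ℂ) 1) := (convex_ball 0 1).isPreconnected
  have D1 : ∀ y ∈ ball (0:ℂ) 1, HasDerivAt (fun z => ∑' n, f n * z ^ (n+1))
      (∑' n, f n * (((n+1 : ℕ):ℂ) * y ^ n)) y := by
    intro y hy
    refine hasDerivAt_tsum_of_isPreconnected (g := fun n z => f n * z ^ (n+1))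
      (g' := fun n z => f n * (((n+1 : ℕ):ℂ) * z ^ n)) hS1 isOpen_ball hpc ?_ b1 h0 ?_ hy
    · intro n y _
      simpa using (hasDerivAt_pow (n+1) y).const_mul (f n)
    · simpa using summable_zero
  have D2 : ∀ y ∈ ball (0:ℂ) 1, HasDerivAt (fun z => ∑' n, f n * (((n+1 : ℕ):ℂ) * z ^ n))
      (∑' n, f n * (((n+1 : ℕ):ℂ) * ((n:ℂ) * y ^ (n-1)))) y := by
    intro y hy
    refine hasDerivAt_tsum_of_isPreconnected (g := fun n z => f n * (((n+1 : ℕ):ℂ) * z ^ n))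
      (g' := fun n z => f n * (((n+1 : ℕ):ℂ) * ((n:ℂ) * z ^ (n-1)))) hS2 isOpen_ball hpc ?_ b2 h0 ?_ hy
    · intro n y _
      exact ((hasDerivAt_pow n y).const_mul _).const_mul (f n)
    · exact Summable.of_norm_bounded hS1 (fun n => b1 n 0 h0)
  intro z hz ζ hζ hne
  have e1 := (D1 z hz).deriv
  have e2 : deriv (deriv (fun z => ∑' n, f n * z ^ (n+1))) z
      = ∑' n, f n * (((n+1 : ℕ):ℂ) * ((n:ℂ) * z ^ (n-1))) := by
    rw [← (D2 z hz).deriv]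
    apply Filter.EventuallyEq.deriv_eq
    filter_upwards [isOpen_ball.mem_nhds hz] with y hy using (D1 y hy).deriv
  rw [e1, e2]
  set u := ∑' n, f n * (((n+1 : ℕ):ℂ) * z ^ n)
  set v := ∑' n, f n * (((n+1 : ℕ):ℂ) * ((n:ℂ) * z ^ (n-1)))
  have nu : ‖u‖ ≤ ∑' n : ℕ, ((n:ℝ) + 1) * ‖f n‖ :=
    tsum_of_norm_bounded hS1.hasSum (fun n => b1 n z hz)
  have nv : ‖v‖ ≤ ∑' n : ℕ, ((n:ℝ) + 1) * n * ‖f n‖ :=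
    tsum_of_norm_bounded hS2.hasSum (fun n => b2 n z hz)
  have nuv : ‖u‖ + 2 * ‖v‖ ≤ 1 := by
    refine le_trans (add_le_add nu (mul_le_mul_of_nonneg_left nv zero_le_two)) ?_
    rw [← tsum_mul_left, ← hS1.tsum_add (hS2.mul_left 2)]
    refine le_trans (le_of_eq ?_) hle
    congr 1; ext n; ring
  have d1 : deriv (fun z : ℂ => z) = fun _ => 1 := by ext x; simp
  rw [d1]
  simp only [deriv_const, mul_one, mul_zero, add_zero]
  set w := z - ζ with hw
  have hw0 : w ≠ 0 := sub_ne_zero.2 hne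
  have hw2 : ‖w‖ ≤ 2 := by
    have h1 := (mem_ball_zero_iff.1 hz).le
    have h2 := (mem_ball_zero_iff.1 hζ).le
    calc ‖w‖ ≤ ‖z‖ + ‖ζ‖ := norm_sub_le _ _
      _ ≤ 2 := by linarith
  set B := conj (w * u) / w with hB
  set V := conj (w ^ 2 * v) / w with hV
  have nw : ‖w‖ ≠ 0 := norm_ne_zero_iff.2 hw0
  have nB : ‖B‖ = ‖u‖ := by
    rw [hB, norm_div, RCLike.norm_conj, norm_mul]; field_simp
  have nV : ‖V‖ ≤ 2 * ‖v‖ := by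
    rw [hV, norm_div, RCLike.norm_conj, norm_mul, norm_pow]
    calc _ = ‖w‖ * ‖v‖ := by field_simp
      _ ≤ _ := by gcongr
  have e : (w + conj (w * u) + conj (w^2 * v)) / (w - conj (w * u)) = (1 + B + V) / (1 - B) := by
    have q1 : conj (w * u) = w * B := by rw [hB]; field_simp
    have q2 : conj (w^2 * v) = w * V := by rw [hV]; field_simp
    rw [q1, q2, ← mul_div_mul_left (1 + B + V) (1 - B) hw0]
    congr 1 <;> ring
  rw [e, Complex.div_re, ← add_div]
  refine div_nonneg ?_ (normSq_nonneg _)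
  have hBV : ‖B‖ + ‖V‖ ≤ 1 := by linarith
  have q3 : (1 + B + V).re * (1 - B).re + (1 + B + V).im * (1 - B).im
      = 1 - ‖B‖^2 + (V * conj (1 - B)).re := by
    rw [← Complex.normSq_eq_norm_sq, Complex.normSq_apply]
    simp
    ring
  have q4 : -(‖V‖ * (1 + ‖B‖)) ≤ (V * conj (1 - B)).re := by
    have h1 := Complex.abs_re_le_norm (V * conj (1 - B))
    rw [norm_mul, RCLike.norm_conj] at h1
    have h2 : ‖1 - B‖ ≤ 1 + ‖B‖ := by simpa using norm_sub_le (1:ℂ) B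
    have h3 := mul_le_mul_of_nonneg_left h2 (norm_nonneg V)
    have := neg_abs_le (V * conj (1 - B)).re
    linarith
  rw [q3]
  nlinarith [norm_nonneg B, norm_nonneg V, mul_nonneg (add_nonneg zero_le_one (norm_nonneg B)) (sub_nonneg.2 hBV)]

lemma extract (a b : ℂ)
    (hab : (∃ a' b' : ℝ, a = (a' : ℂ) ∧ b = (b' : ℂ) ∧ -1 < a' ∧ -1 < b' ∧ 0 < a' * b') ∨
           (a ≠ 0 ∧ b ≠ 0 ∧ b = conj a))
    (c : ℝ) (hc : 0 < c) (hc1 : (a + b).re + 2 < c) :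
    ∃ s p : ℝ, a + b = s ∧ a * b = p ∧ 0 < p ∧ s + 2 < c ∧
      (∀ k : ℕ, 0 ≤ (k:ℝ)^2 + s * k + p) ∧ 0 < ((c:ℂ) - a).re ∧ 0 < ((c:ℂ) - b).re := by
  rcases hab with ⟨x, y, rfl, rfl, hx, hy, hxy⟩ | ⟨ha, _, rfl⟩
  · simp at hc1
    refine ⟨x + y, x * y, by simp, by simp, hxy, hc1, ?_, by simp; linarith, by simp; linarith⟩
    intro k
    rcases k with _ | k
    · simpa using hxy.le
    · have hk := Nat.cast_nonneg (α := ℝ) k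
      push_cast
      have : 0 ≤ (x + (k + 1)) * (y + (k+1)) := mul_nonneg (by linarith) (by linarith)
      linarith
  · simp at hc1
    refine ⟨2 * a.re, normSq a, ?_, Complex.mul_conj a, normSq_pos.2 ha, by linarith, ?_,
      by simp; linarith, by simp; linarith⟩
    · rw [Complex.add_conj]
    · intro k
      rw [Complex.normSq_apply]
      nlinarith [sq_nonneg (k + a.re), sq_nonneg a.im]

/-- Theorem 6(a): under the stated conditions on `a, b, c, α`, the
coefficients of `g₁(z) = (α/2) z F(a,b;c;z)` satisfy `∑_{n≥1} n(2n-1)|bₙ| ≤ 1`;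
consequently `f₁(z) = z + conj(g₁(z))` is uniformly convex in `𝔻`. -/
theorem hypergeom_uniformly_convex_a (a b : ℂ)
    (hab : (∃ a' b' : ℝ, a = (a' : ℂ) ∧ b = (b' : ℂ) ∧ -1 < a' ∧ -1 < b' ∧ 0 < a' * b') ∨
           (a ≠ 0 ∧ b ≠ 0 ∧ b = conj a))
    (c : ℝ) (hc : 0 < c) (hc1 : (a + b).re + 2 < c)
    (α : ℂ) (hα : ‖α‖ < 1)
    (hQ : ∃ q : ℝ, 0 < q ∧ q ≤ 2 ∧
      (q : ℂ) = (‖α‖ : ℂ) * (Complex.Gamma (c : ℂ) * Complex.Gamma ((c : ℂ) - a - b)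
          / (Complex.Gamma ((c : ℂ) - a) * Complex.Gamma ((c : ℂ) - b)))
        * (2 * poch a 2 * poch b 2 / poch ((c : ℂ) - a - b - 2) 2
          + 5 * a * b / ((c : ℂ) - a - b - 1) + 1)) :
    (Summable fun n : ℕ =>
      (((n + 1) * (2 * (n + 1) - 1) : ℝ)) * ‖bc1 a b (c : ℂ) α n‖) ∧
    (∑' n : ℕ, (((n + 1) * (2 * (n + 1) - 1) : ℝ)) * ‖bc1 a b (c : ℂ) α n‖) ≤ 1 ∧
    UniformlyConvexOnDisk (fun z => z) (fun z => α / 2 * z * hypF a b (c : ℂ) z) := by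
  obtain ⟨s, p, hs, hp, hp0, hcs, hk, hca, hcb⟩ := extract a b hab c hc hc1
  have nb : ∀ n, ‖bc1 a b (c : ℂ) α n‖ = ‖α‖ / 2 * hA s p c n := by
    intro n
    unfold bc1
    rw [mul_div_assoc, coef_eq a b s p c hs hp, norm_mul, norm_div, Complex.norm_real,
      Real.norm_of_nonneg (hA_nonneg s p c hc hk n)]
    simp
  obtain ⟨S, hle⟩ := main_sum s p c hc hp0 hcs hk
  have eq : (fun n : ℕ => (((n + 1) * (2 * (n + 1) - 1) : ℝ)) * ‖bc1 a b (c : ℂ) α n‖)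
      = fun n : ℕ => ‖α‖ / 2 * ((((n + 1) * (2 * (n + 1) - 1) : ℝ)) * hA s p c n) := by
    ext n; rw [nb]; ring
  have hS : Summable fun n : ℕ =>
      (((n + 1) * (2 * (n + 1) - 1) : ℝ)) * ‖bc1 a b (c : ℂ) α n‖ := by
    rw [eq]; exact S.mul_left _
  have hT : (∑' n : ℕ, (((n + 1) * (2 * (n + 1) - 1) : ℝ)) * ‖bc1 a b (c : ℂ) α n‖) ≤ 1 := by
    rw [eq, tsum_mul_left]
    obtain ⟨q, _, hq2, hq⟩ := hQ
    have T := gP_tendsto a b s p c hs hp hc hcs hca hcb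
    set G := Complex.Gamma (c : ℂ) * Complex.Gamma ((c : ℂ) - a - b)
          / (Complex.Gamma ((c : ℂ) - a) * Complex.Gamma ((c : ℂ) - b)) with hG
    have Tr : Filter.Tendsto (fun N => gP s p c (N+1)) Filter.atTop (nhds G.re) := by
      simpa [Function.comp_def] using (Complex.continuous_re.tendsto G).comp T
    have Ti : Filter.Tendsto (fun _ : ℕ => (0:ℝ)) Filter.atTop (nhds G.im) := by
      simpa [Function.comp_def] using (Complex.continuous_im.tendsto G).comp T
    have hi : G.im = 0 := tendsto_nhds_unique Ti tendsto_const_nhds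
    have hGr : G = (G.re : ℂ) := by apply Complex.ext <;> simp [hi]
    have hF := F_le s p c hc hp0 hcs hk G.re Tr
    have hcs' : (c:ℂ) - a - b = (c:ℂ) - s := by rw [← hs]; ring
    have pa : poch a 2 * poch b 2 = (p:ℂ) * (1 + s + p) := by
      rw [poch_prod, poch_prod, ← hs, ← hp]
      simp [Finset.prod_range_succ]; ring
    have pc : poch ((c : ℂ) - a - b - 2) 2 = ((c:ℂ) - s - 2) * (c - s - 1) := by
      rw [poch_prod, hcs']
      simp [Finset.prod_range_succ]; ring_nf; simp
    have hqr : q = ‖α‖ * G.re * (2 * (p * (1 + s + p)) / ((c - s - 2) * (c - s - 1))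
        + 5 * p / (c - s - 1) + 1) := by
      rw [hGr, mul_assoc 2, pa, pc, mul_assoc 5, hp, hcs'] at hq
      exact_mod_cast hq
    have hr : 0 ≤ 1 + s + p := by have := hk 1; norm_num at this; linarith
    have d1 : 0 < c - s - 1 := by linarith
    have d2 : 0 < c - s - 2 := by linarith
    have hBr : 0 ≤ 2 * (p * (1 + s + p)) / ((c - s - 2) * (c - s - 1))
        + 5 * p / (c - s - 1) + 1 := by positivity
    calc _ ≤ ‖α‖ / 2 * ((2 * (p * (1 + s + p)) / ((c - s - 2) * (c - s - 1))
        + 5 * p / (c - s - 1) + 1) * G.re) := by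
          refine mul_le_mul_of_nonneg_left (hle.trans ?_) (by positivity)
          exact mul_le_mul_of_nonneg_left hF hBr
      _ = q / 2 := by rw [hqr]; ring
      _ ≤ 1 := by linarith
  refine ⟨hS, hT, ?_⟩
  have hg : (fun z => α / 2 * z * hypF a b (c : ℂ) z)
      = fun z => ∑' n, bc1 a b (c : ℂ) α n * z ^ (n+1) := by
    ext z
    unfold hypF bc1
    rw [← tsum_mul_left]
    congr 1; ext n; ring
  rw [hg]
  exact unif_convex _ hS hT
end
end
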